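/- Let L be an ideal lattice. Then the prime spectrum Spec L is a spectral space: it is T0, quasi-compact, its quasi-compact open subsets are closed under finite intersections and form a basis of the topology, and every non-empty irreducible closed subset has a generic point. -/

import Mathlib

open CompleteLattice TopologicalSpace

/-- An ideal lattice: a complete, compactly generated lattice with an associative
multiplication distributing over finite suprema, for which `⊤` is a compact
two-sided identity and products of compact elements are compact. -/
structure IsIdealLattice (α : Type*) [CompleteLattice α] [Mul α] : Prop where
  mul_assoc : ∀ a b c : α, a * b * c = a * (b * c)
  compactlyGenerated : ∀ a : α, a = sSup {b : α | b ≤ a ∧ IsCompactElement b}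
  mul_sup : ∀ a b c : α, a * (b ⊔ c) = a * b ⊔ a * c
  sup_mul : ∀ a b c : α, (a ⊔ b) * c = a * c ⊔ b * c
  top_compact : IsCompactElement (⊤ : α)
  top_mul : ∀ a : α, ⊤ * a = a
  mul_top : ∀ a : α, a * ⊤ = a
  compact_mul : ∀ a b : α, IsCompactElement a → IsCompactElement b → IsCompactElement (a * b)

/-- A prime element of an ideal lattice: `p ≠ ⊤` and `a * b ≤ p` implies `a ≤ p` or `b ≤ p`. -/
def IsPrimeElt {α : Type*} [CompleteLattice α] [Mul α] (p : α) : Prop :=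
  p ≠ ⊤ ∧ ∀ a b : α, a * b ≤ p → a ≤ p ∨ b ≤ p

/-- A semi-prime element of an ideal lattice: `b * b ≤ a` implies `b ≤ a`. -/
def IsSemiprimeElt {α : Type*} [CompleteLattice α] [Mul α] (a : α) : Prop :=
  ∀ b : α, b * b ≤ a → b ≤ a

/-- The prime spectrum of an ideal lattice: the set of prime elements. -/
def SpecL (α : Type*) [CompleteLattice α] [Mul α] : Type _ := {p : α // IsPrimeElt p}

/-- The Zariski-closed set `V(a) = {p ∈ Spec L : a ≤ p}`. -/
def zV {α : Type*} [CompleteLattice α] [Mul α] (a : α) : Set (SpecL α) := {p | a ≤ p.1}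

/-- The Zariski-open set `D(a) = {p ∈ Spec L : a ≰ p}`. -/
def zD {α : Type*} [CompleteLattice α] [Mul α] (a : α) : Set (SpecL α) := {p | ¬ a ≤ p.1}

/-- The Zariski topology on `SpecL α`: the open sets are exactly the sets `zD a`. -/
instance {α : Type*} [CompleteLattice α] [Mul α] : TopologicalSpace (SpecL α) :=
  TopologicalSpace.generateFrom {U : Set (SpecL α) | ∃ a : α, U = zD a}

namespace IsIdealLattice

variable {α : Type*} [CompleteLattice α] [Mul α]

lemma mul_le_mul (hL : IsIdealLattice α) {a b c d : α} (hac : a ≤ c) (hbd : b ≤ d) :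
    a * b ≤ c * d := by
  have h₁ : a * b ≤ c * b := by
    rw [← sup_eq_right.2 hac, hL.sup_mul]
    exact le_sup_left
  have h₂ : c * b ≤ c * d := by
    rw [← sup_eq_right.2 hbd, hL.mul_sup]
    exact le_sup_left
  exact h₁.trans h₂

lemma mul_le_left (hL : IsIdealLattice α) (a b : α) : a * b ≤ a :=
  (hL.mul_le_mul le_rfl le_top).trans (hL.mul_top a).le

lemma mul_le_right (hL : IsIdealLattice α) (a b : α) : a * b ≤ b :=
  (hL.mul_le_mul le_top le_rfl).trans (hL.top_mul b).le

/-- Krull's separation lemma: an element that bounds no member of a nonempty multiplicatively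
closed set of compact elements lies below a prime with the same property. -/
lemma exists_isPrimeElt_forall_not_le (hL : IsIdealLattice α) {S : Set α} (hS : S.Nonempty)
    (hcompact : ∀ c ∈ S, IsCompactElement c) (hmul : ∀ c ∈ S, ∀ d ∈ S, c * d ∈ S)
    {b : α} (hb : ∀ c ∈ S, ¬ c ≤ b) :
    ∃ p, b ≤ p ∧ IsPrimeElt p ∧ ∀ c ∈ S, ¬ c ≤ p := by
  obtain ⟨p, hbp, hp⟩ := zorn_le_nonempty₀ {x : α | ∀ c ∈ S, ¬ c ≤ x}
    (fun C hC hchain y hy => ⟨sSup C, fun c hc hle => by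
      obtain ⟨x, hx, hcx⟩ := (isCompactElement_iff_le_of_directed_sSup_le α c).1 (hcompact c hc)
        C ⟨y, hy⟩ hchain.directedOn hle
      exact hC hx c hc hcx, fun z hz => le_sSup hz⟩) b hb
  refine ⟨p, hbp, ⟨?_, fun x y hxy => ?_⟩, hp.prop⟩
  · rintro rfl
    obtain ⟨c, hc⟩ := hS
    exact hp.prop c hc le_top
  · by_contra! hcon
    have key : ∀ z, ¬ z ≤ p → ∃ c ∈ S, c ≤ p ⊔ z := by
      intro z hz
      by_contra! h
      exact hz (le_sup_right.trans (hp.le_of_ge h le_sup_left))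
    obtain ⟨c, hc, hcx⟩ := key x hcon.1
    obtain ⟨d, hd, hdy⟩ := key y hcon.2
    refine hp.prop _ (hmul c hc d hd) ((hL.mul_le_mul hcx hdy).trans ?_)
    rw [hL.sup_mul, hL.mul_sup x]
    exact sup_le (hL.mul_le_left _ _) (sup_le (hL.mul_le_right _ _) hxy)

lemma zD_mul (hL : IsIdealLattice α) (a b : α) : (zD (a * b) : Set (SpecL α)) = zD a ∩ zD b := by
  ext p
  refine ⟨fun h => ⟨fun ha => h ((hL.mul_le_left a b).trans ha),
    fun hb => h ((hL.mul_le_right a b).trans hb)⟩, fun h hab => ?_⟩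
  exact (p.2.2 a b hab).elim h.1 h.2

lemma isOpen_iff (hL : IsIdealLattice α) {U : Set (SpecL α)} : IsOpen U ↔ ∃ a : α, U = zD a := by
  refine ⟨fun h => ?_, fun h => isOpen_generateFrom_of_mem h⟩
  induction h with
  | basic U hU => exact hU
  | univ =>
    exact ⟨⊤, (Set.eq_univ_of_forall fun p h => p.2.1 (top_le_iff.1 h)).symm⟩
  | inter U V _ _ hU hV =>
    obtain ⟨a, rfl⟩ := hU
    obtain ⟨b, rfl⟩ := hV
    exact ⟨a * b, (hL.zD_mul a b).symm⟩
  | sUnion C _ hC =>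
    choose f hf using hC
    refine ⟨⨆ U : C, f U.1 U.2, ?_⟩
    ext p
    simp only [zD, iSup_le_iff, not_forall, Set.mem_sUnion, Set.mem_ofPred_eq, Subtype.exists]
    refine exists_congr fun U => ⟨fun h => ⟨h.1, ?_⟩, fun ⟨hU, h⟩ => ⟨hU, ?_⟩⟩
    · have := h.2
      rwa [hf U h.1] at this
    · rw [hf U hU]
      exact h

lemma compl_zD (a : α) : (zD a : Set (SpecL α))ᶜ = zV a :=
  Set.ext fun _ => not_not

lemma isClosed_iff (hL : IsIdealLattice α) {S : Set (SpecL α)} :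
    IsClosed S ↔ ∃ a : α, S = zV a := by
  rw [← isOpen_compl_iff, hL.isOpen_iff]
  refine exists_congr fun a => ?_
  rw [compl_eq_comm, compl_zD, eq_comm]

lemma isCompact_zD (hL : IsIdealLattice α) {a : α} (ha : IsCompactElement a) :
    IsCompact (zD a : Set (SpecL α)) := by
  refine isCompact_of_finite_subcover fun {ι} U hU hcover => ?_
  choose b hb using fun i => hL.isOpen_iff.1 (hU i)
  let S : Set α := {c | IsCompactElement c ∧ ∀ p, IsPrimeElt p → c ≤ p → a ≤ p}
  have haS : a ∈ S := ⟨ha, fun _ _ h => h⟩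
  obtain ⟨c, ⟨hc, hca⟩, hcb⟩ : ∃ c ∈ S, c ≤ ⨆ i, b i := by
    by_contra! hcon
    obtain ⟨p, hbp, hp, hpS⟩ := hL.exists_isPrimeElt_forall_not_le
      ⟨a, haS⟩ (fun c hc => hc.1)
      (fun c hc d hd => ⟨hL.compact_mul c d hc.1 hd.1, fun p hp h =>
        (hp.2 c d h).elim (hc.2 p hp) (hd.2 p hp)⟩) hcon
    obtain ⟨i, hi⟩ := Set.mem_iUnion.1
      (hcover (show (⟨p, hp⟩ : SpecL α) ∈ zD a from hpS a haS))
    rw [hb i] at hi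
    exact hi ((le_iSup b i).trans hbp)
  obtain ⟨t, ht⟩ := IsCompactElement.exists_finset_of_le_iSup α hc b hcb
  refine ⟨t, fun p hp => ?_⟩
  by_contra hcon
  simp only [Set.mem_iUnion, not_exists] at hcon
  refine hp (hca p.1 p.2 (ht.trans (iSup₂_le fun i hi => ?_)))
  have := hcon i hi
  rw [hb i] at this
  exact not_not.1 this

lemma isTopologicalBasis_zD (hL : IsIdealLattice α) :
    IsTopologicalBasis (Set.range fun c : {c : α // IsCompactElement c} =>
      (zD c.1 : Set (SpecL α))) := by
  refine isTopologicalBasis_of_isOpen_of_nhds ?_ fun p U hp hU => ?_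
  · rintro _ ⟨c, rfl⟩
    exact hL.isOpen_iff.2 ⟨c, rfl⟩
  · obtain ⟨a, rfl⟩ := hL.isOpen_iff.1 hU
    obtain ⟨c, ⟨hca, hc⟩, hcp⟩ : ∃ c ∈ {c : α | c ≤ a ∧ IsCompactElement c}, ¬ c ≤ p.1 := by
      by_contra! hcon
      exact hp ((hL.compactlyGenerated a).le.trans (sSup_le hcon))
    exact ⟨_, ⟨⟨c, hc⟩, rfl⟩, hcp, fun q hq haq => hq (hca.trans haq)⟩

lemma compactSpace_specL (hL : IsIdealLattice α) : CompactSpace (SpecL α) := by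
  refine ⟨?_⟩
  rw [← Set.eq_univ_of_forall (s := zD (⊤ : α)) fun p h => p.2.1 (top_le_iff.1 h)]
  exact hL.isCompact_zD hL.top_compact

lemma t0Space_specL : T0Space (SpecL α) := by
  refine ⟨fun p q h => Subtype.ext ?_⟩
  have key : ∀ a : α, a ≤ p.1 ↔ a ≤ q.1 := fun a =>
    not_iff_not.1 (h.mem_open_iff (isOpen_generateFrom_of_mem ⟨a, rfl⟩ : IsOpen (zD a)))
  exact le_antisymm ((key _).1 le_rfl) ((key _).2 le_rfl)

lemma quasiSober_specL (hL : IsIdealLattice α) : QuasiSober (SpecL α) := by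
  refine ⟨fun {S} hS hclosed => ?_⟩
  obtain ⟨a, ha⟩ := hL.isClosed_iff.1 hclosed
  have hle : ∀ {b : α}, S ⊆ zV b ↔ b ≤ ⨅ p : S, p.1.1 := fun {b} =>
    ⟨fun h => le_iInf fun p => h p.2, fun h p hp => h.trans (iInf_le (fun p : S => p.1.1) ⟨p, hp⟩)⟩
  have hprime : IsPrimeElt (⨅ p : S, p.1.1) := by
    refine ⟨fun htop => ?_, fun b c hbc => ?_⟩
    · obtain ⟨p, hp⟩ := hS.nonempty
      exact p.2.1 (top_le_iff.1 (hle.2 htop.ge hp))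
    · rw [← hle, ← hle]
      exact isPreirreducible_iff_isClosed_union_isClosed.1 hS.isPreirreducible _ _
        (hL.isClosed_iff.2 ⟨b, rfl⟩) (hL.isClosed_iff.2 ⟨c, rfl⟩)
        fun p hp => p.2.2 b c (hle.2 hbc hp)
  refine ⟨⟨_, hprime⟩, Set.Subset.antisymm ?_ fun p hp => ?_⟩
  · refine closure_minimal (Set.singleton_subset_iff.2 ?_) hclosed
    exact ha.ge (hle.1 ha.le)
  · rw [mem_closure_iff]
    intro U hU hpU
    obtain ⟨b, rfl⟩ := hL.isOpen_iff.1 hU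
    exact ⟨_, fun h => hpU (hle.2 h hp), rfl⟩

end IsIdealLattice

/-- The prime spectrum `Spec L` of an ideal lattice is a spectral space: it is T0 and
quasi-compact, its quasi-compact open subsets are closed under finite intersections and
form a basis of the topology, and every non-empty irreducible closed subset has a
generic point. -/
theorem specL_spectral {α : Type*} [CompleteLattice α] [Mul α]
    (hL : IsIdealLattice α) :
    T0Space (SpecL α) ∧
    CompactSpace (SpecL α) ∧
    (∀ U V : Set (SpecL α), IsOpen U → IsCompact U → IsOpen V → IsCompact V →
      IsCompact (U ∩ V)) ∧
    TopologicalSpace.IsTopologicalBasis {U : Set (SpecL α) | IsOpen U ∧ IsCompact U} ∧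
    QuasiSober (SpecL α) := by
  have hbasis := hL.isTopologicalBasis_zD
  have hsep : QuasiSeparatedSpace (SpecL α) := .of_isTopologicalBasis hbasis fun a b => by
    rw [← hL.zD_mul]
    exact hL.isCompact_zD (hL.compact_mul _ _ a.2 b.2)
  have hspec : PrespectralSpace (SpecL α) :=
    .of_isTopologicalBasis' hbasis fun a => hL.isCompact_zD a.2
  exact ⟨IsIdealLattice.t0Space_specL, hL.compactSpace_specL, hsep.inter_isCompact,
    hspec.isTopologicalBasis, hL.quasiSober_specL⟩
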